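/- Under the uniform distribution on S_n(132), conditioned on σ_j = n (with 1 ≤ j ≤ n-1), the permutations red(σ_1⋯σ_{j-1}) and σ_{j+1}⋯σ_n are independent, with distributions uniform on S_{j-1}(132) and uniform on S_{n-j}(132) respectively. -/

import Mathlib

/-- `σ` avoids the pattern 132. -/
def Avoids132 {n : ℕ} (σ : Equiv.Perm (Fin n)) : Prop :=
  ¬ ∃ i₁ i₂ i₃ : Fin n, i₁ < i₂ ∧ i₂ < i₃ ∧ σ i₁ < σ i₃ ∧ σ i₃ < σ i₂

/-!
If `σ` avoids 132 and has its maximum at position `p`, then every entry left of `p` exceeds every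
entry right of `p`, since otherwise the two entries together with the maximum would form a 132.
Hence `σ = (τ₁ ⊕ 1) ⊖ τ₂`, where `τ₁` is the reduction of the entries left of `p` and `τ₂` is the
word right of `p`. Conversely `(τ₁ ⊕ 1) ⊖ τ₂` avoids 132 as soon as `τ₁` and `τ₂` do, so the fibre
over `p` is a product, and summing over `p` yields the Catalan recursion.
-/

open Equiv (Perm)

variable {a k m n : ℕ}

/-- The direct sum `σ ⊕ τ` of permutations: `τ` is placed to the right of and above `σ`. -/
def directSum (σ : Perm (Fin a)) (τ : Perm (Fin m)) : Perm (Fin (a + m)) :=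
  finSumFinEquiv.permCongr (Equiv.sumCongr σ τ)

/-- The cyclic shift of `Fin (a + m)` that moves the first `a` elements past the last `m`. -/
def blockSwap (a m : ℕ) : Perm (Fin (a + m)) :=
  finAddFlip.trans (finCongr (Nat.add_comm m a))

/-- The skew sum `σ ⊖ τ` of permutations: `τ` is placed to the right of and below `σ`. It is encoded
as the direct sum followed by the exchange of the two blocks of values. -/
def skewSum (σ : Perm (Fin a)) (τ : Perm (Fin m)) : Perm (Fin (a + m)) :=
  (directSum σ τ).trans (blockSwap a m)

/-- The permutation `(τ₁ ⊕ 1) ⊖ τ₂`, in which `τ₁` stands to the left of the maximum and `τ₂` to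
its right. -/
def glueAtMax (τ₁ : Perm (Fin a)) (τ₂ : Perm (Fin m)) : Perm (Fin (a + 1 + m)) :=
  skewSum (directSum τ₁ (1 : Perm (Fin 1))) τ₂

theorem directSum_castAdd (σ : Perm (Fin a)) (τ : Perm (Fin m)) (i : Fin a) :
    directSum σ τ (Fin.castAdd m i) = Fin.castAdd m (σ i) := by
  simp [directSum]

theorem directSum_natAdd (σ : Perm (Fin a)) (τ : Perm (Fin m)) (j : Fin m) :
    directSum σ τ (Fin.natAdd a j) = Fin.natAdd a (τ j) := by
  simp [directSum]

theorem val_blockSwap_symm_of_le {x : Fin (a + m)} (h : m ≤ x) :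
    ((blockSwap a m).symm x : ℕ) = x - m :=
  congrArg Fin.val (finAddFlip_apply_mk_right h (x.isLt.trans_eq (Nat.add_comm a m)))

theorem val_skewSum_castAdd (σ : Perm (Fin a)) (τ : Perm (Fin m)) (i : Fin a) :
    (skewSum σ τ (Fin.castAdd m i) : ℕ) = m + σ i := by
  simp [skewSum, blockSwap, directSum_castAdd, Nat.add_comm]

theorem val_skewSum_natAdd (σ : Perm (Fin a)) (τ : Perm (Fin m)) (j : Fin m) :
    (skewSum σ τ (Fin.natAdd a j) : ℕ) = τ j := by
  simp [skewSum, blockSwap, directSum_natAdd]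

theorem val_glueAtMax_left (τ₁ : Perm (Fin a)) (τ₂ : Perm (Fin m)) (i : Fin a) :
    (glueAtMax τ₁ τ₂ (Fin.castAdd m (Fin.castAdd 1 i)) : ℕ) = m + τ₁ i := by
  rw [glueAtMax, val_skewSum_castAdd, directSum_castAdd, Fin.val_castAdd]

theorem val_glueAtMax_max (τ₁ : Perm (Fin a)) (τ₂ : Perm (Fin m)) :
    (glueAtMax τ₁ τ₂ (Fin.castAdd m (Fin.natAdd a 0)) : ℕ) = m + a := by
  rw [glueAtMax, val_skewSum_castAdd, directSum_natAdd]
  rfl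

theorem val_glueAtMax_right (τ₁ : Perm (Fin a)) (τ₂ : Perm (Fin m)) (j : Fin m) :
    (glueAtMax τ₁ τ₂ (Fin.natAdd (a + 1) j) : ℕ) = τ₂ j :=
  val_skewSum_natAdd _ _ _

theorem glueAtMax_injective2 :
    Function.Injective2 (glueAtMax : Perm (Fin a) → Perm (Fin m) → Perm (Fin (a + 1 + m))) := by
  refine fun τ₁ τ₁' τ₂ τ₂' h => ⟨?_, ?_⟩ <;> ext i
  · exact Nat.add_left_cancel <| by rw [← val_glueAtMax_left τ₁ τ₂, h, val_glueAtMax_left]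
  · rw [← val_glueAtMax_right τ₁ τ₂, h, val_glueAtMax_right]

theorem exists_eq_directSum {σ : Perm (Fin (a + m))}
    (h : ∀ i : Fin a, (σ (Fin.castAdd m i) : ℕ) < a) :
    ∃ (σ₁ : Perm (Fin a)) (σ₂ : Perm (Fin m)), σ = directSum σ₁ σ₂ := by
  have maps_left : Set.MapsTo (finSumFinEquiv.symm.permCongr σ)
      (Set.range (Sum.inl : Fin a → Fin a ⊕ Fin m)) (Set.range Sum.inl) := by
    rintro _ ⟨i, rfl⟩
    refine ⟨⟨_, h i⟩, finSumFinEquiv.injective ?_⟩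
    simp [Equiv.permCongr_apply]
  obtain ⟨⟨σ₁, σ₂⟩, hσ⟩ := Perm.mem_sumCongrHom_range_of_perm_mapsTo_inl maps_left
  exact ⟨σ₁, σ₂, finSumFinEquiv.permCongr.symm_apply_eq.mp hσ.symm⟩

theorem exists_eq_skewSum {σ : Perm (Fin (a + m))}
    (h : ∀ (i : Fin a) (j : Fin m), σ (Fin.natAdd a j) < σ (Fin.castAdd m i)) :
    ∃ (σ₁ : Perm (Fin a)) (σ₂ : Perm (Fin m)), σ = skewSum σ₁ σ₂ := by
  have m_le (i : Fin a) : m ≤ σ (Fin.castAdd m i) := by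
    simpa using Finset.card_le_card_of_injOn (s := Finset.univ)
      (t := Finset.Iio (σ (Fin.castAdd m i))) (fun j : Fin m => σ (Fin.natAdd a j))
      (fun j _ => Finset.mem_coe.mpr (Finset.mem_Iio.mpr (h i j)))
      (σ.injective.comp (Fin.natAdd_injective m a)).injOn
  have swapped_lt (i : Fin a) :
      ((σ.trans (blockSwap a m).symm) (Fin.castAdd m i) : ℕ) < a := by
    rw [Equiv.trans_apply, val_blockSwap_symm_of_le (m_le i)]
    exact Nat.sub_lt_right_of_lt_add (m_le i) (σ _).isLt
  obtain ⟨σ₁, σ₂, hσ⟩ := exists_eq_directSum swapped_lt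
  exact ⟨σ₁, σ₂, by rw [skewSum, ← hσ, Equiv.trans_assoc, Equiv.symm_trans_self, Equiv.trans_refl]⟩

theorem Avoids132.of_strictMono {σ : Perm (Fin n)} (hσ : Avoids132 σ) {τ : Perm (Fin k)}
    {f : Fin k → Fin n} (hf : StrictMono f) (hτ : ∀ i j, τ i < τ j → σ (f i) < σ (f j)) :
    Avoids132 τ :=
  fun ⟨i₁, i₂, i₃, h₁₂, h₂₃, h₁₃, h₃₂⟩ =>
    hσ ⟨f i₁, f i₂, f i₃, hf h₁₂, hf h₂₃, hτ _ _ h₁₃, hτ _ _ h₃₂⟩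

theorem Avoids132.lt_of_isMax {σ : Perm (Fin n)} (hσ : Avoids132 σ) {i p j : Fin n}
    (hmax : ∀ x, σ x ≤ σ p) (hip : i < p) (hpj : p < j) : σ j < σ i := by
  by_contra! hle
  have hij : σ i < σ j := hle.lt_of_ne (σ.injective.ne (hip.trans hpj).ne)
  have hjp : σ j < σ p := (hmax j).lt_of_ne (σ.injective.ne hpj.ne')
  exact hσ ⟨i, p, j, hip, hpj, hij, hjp⟩

theorem avoids132_skewSum_iff {σ : Perm (Fin a)} {τ : Perm (Fin m)} :
    Avoids132 (skewSum σ τ) ↔ Avoids132 σ ∧ Avoids132 τ := by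
  refine ⟨fun h => ⟨h.of_strictMono (Fin.strictMono_castAdd m) fun i j hij => ?_,
    h.of_strictMono (Fin.strictMono_natAdd a) fun i j hij => ?_⟩, ?_⟩
  · rwa [Fin.lt_def, val_skewSum_castAdd, val_skewSum_castAdd, Nat.add_lt_add_iff_left]
  · rwa [Fin.lt_def, val_skewSum_natAdd, val_skewSum_natAdd]
  -- The left block lies above the right one, so an occurrence of 132 cannot meet both blocks.
  rintro ⟨hσ, hτ⟩ ⟨i₁, i₂, i₃, h₁₂, h₂₃, h₁₃, h₃₂⟩
  induction i₁ using Fin.addCases <;> induction i₂ using Fin.addCases <;>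
    induction i₃ using Fin.addCases <;>
    simp only [Fin.lt_def, val_skewSum_castAdd, val_skewSum_natAdd, Fin.val_castAdd,
      Fin.val_natAdd, Nat.add_lt_add_iff_left] at h₁₂ h₂₃ h₁₃ h₃₂ <;>
    first
      | omega
      | exact hσ ⟨_, _, _, h₁₂, h₂₃, h₁₃, h₃₂⟩
      | exact hτ ⟨_, _, _, h₁₂, h₂₃, h₁₃, h₃₂⟩

theorem avoids132_directSum_one_iff {τ : Perm (Fin a)} :
    Avoids132 (directSum τ (1 : Perm (Fin 1))) ↔ Avoids132 τ := by
  refine ⟨fun h => h.of_strictMono (Fin.strictMono_castAdd 1) fun i j hij => ?_, ?_⟩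
  · rwa [directSum_castAdd, directSum_castAdd, (Fin.strictMono_castAdd 1).lt_iff_lt]
  -- A maximum in last position cannot take part in an occurrence of 132.
  rintro hτ ⟨i₁, i₂, i₃, h₁₂, h₂₃, h₁₃, h₃₂⟩
  induction i₁ using Fin.addCases <;> induction i₂ using Fin.addCases <;>
    induction i₃ using Fin.addCases <;>
    simp only [Fin.lt_def, directSum_castAdd, directSum_natAdd, Fin.val_castAdd,
      Fin.val_natAdd] at h₁₂ h₂₃ h₁₃ h₃₂ <;>
    first
      | omega
      | exact hτ ⟨_, _, _, h₁₂, h₂₃, h₁₃, h₃₂⟩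

theorem avoids132_glueAtMax_iff {τ₁ : Perm (Fin a)} {τ₂ : Perm (Fin m)} :
    Avoids132 (glueAtMax τ₁ τ₂) ↔ Avoids132 τ₁ ∧ Avoids132 τ₂ := by
  rw [glueAtMax, avoids132_skewSum_iff, avoids132_directSum_one_iff]

theorem Avoids132.exists_eq_glueAtMax {σ : Perm (Fin (a + 1 + m))} (hσ : Avoids132 σ)
    (hmax : ∀ x, σ x ≤ σ (Fin.castAdd m (Fin.natAdd a 0))) :
    ∃ (τ₁ : Perm (Fin a)) (τ₂ : Perm (Fin m)), σ = glueAtMax τ₁ τ₂ := by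
  have lt_max {x : Fin (a + 1 + m)} (hx : (x : ℕ) ≠ a) : σ x < σ (Fin.castAdd m (Fin.natAdd a 0)) :=
    (hmax x).lt_of_ne (σ.injective.ne fun h => hx (congrArg Fin.val h))
  have right_lt_left (i : Fin (a + 1)) (j : Fin m) :
      σ (Fin.natAdd (a + 1) j) < σ (Fin.castAdd m i) := by
    induction i using Fin.addCases with
    | left i =>
      exact hσ.lt_of_isMax hmax (Fin.lt_def.mpr i.isLt)
        (Fin.lt_def.mpr (Nat.lt_add_right j a.lt_succ_self))
    | right i =>
      rw [Subsingleton.elim i 0]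
      exact lt_max (by rw [Fin.val_natAdd]; omega)
  obtain ⟨ρ, τ₂, rfl⟩ := exists_eq_skewSum right_lt_left
  have ρ_lt (i : Fin a) : (ρ (Fin.castAdd 1 i) : ℕ) < a := by
    have h := lt_max (x := Fin.castAdd m (Fin.castAdd 1 i)) i.isLt.ne
    rw [Fin.lt_def, val_skewSum_castAdd, val_skewSum_castAdd] at h
    omega
  obtain ⟨τ₁, τ₀, rfl⟩ := exists_eq_directSum ρ_lt
  exact ⟨τ₁, τ₂, by rw [glueAtMax, Subsingleton.elim τ₀ 1]⟩

theorem avoids132_and_val_eq_iff {p : Fin (a + 1 + m)} (hp : (p : ℕ) = a)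
    {σ : Perm (Fin (a + 1 + m))} :
    Avoids132 σ ∧ (σ p : ℕ) = a + 1 + m - 1 ↔
      ∃ (τ₁ : Perm (Fin a)) (τ₂ : Perm (Fin m)),
        Avoids132 τ₁ ∧ Avoids132 τ₂ ∧ glueAtMax τ₁ τ₂ = σ := by
  obtain rfl : p = Fin.castAdd m (Fin.natAdd a 0) := Fin.ext hp
  constructor
  · rintro ⟨hσ, hmax⟩
    obtain ⟨τ₁, τ₂, rfl⟩ := hσ.exists_eq_glueAtMax fun x => by rw [Fin.le_def]; omega
    obtain ⟨hτ₁, hτ₂⟩ := avoids132_glueAtMax_iff.mp hσ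
    exact ⟨τ₁, τ₂, hτ₁, hτ₂, rfl⟩
  · rintro ⟨τ₁, τ₂, hτ₁, hτ₂, rfl⟩
    exact ⟨avoids132_glueAtMax_iff.mpr ⟨hτ₁, hτ₂⟩, by rw [val_glueAtMax_max]; omega⟩

theorem card_avoids132_and_val_eq {p : Fin n} (h : p + 1 + m = n) :
    Nat.card {σ : Perm (Fin n) // Avoids132 σ ∧ (σ p : ℕ) = n - 1} =
      Nat.card {τ : Perm (Fin p) // Avoids132 τ} * Nat.card {τ : Perm (Fin m) // Avoids132 τ} := by
  obtain ⟨a, ha⟩ := p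
  obtain rfl : a + 1 + m = n := h
  rw [← Nat.card_prod]
  refine (Nat.card_eq_of_bijective (fun τ => ⟨glueAtMax τ.1.1 τ.2.1,
    (avoids132_and_val_eq_iff rfl).mpr ⟨_, _, τ.1.2, τ.2.2, rfl⟩⟩) ⟨fun τ τ' h => ?_, ?_⟩).symm
  · obtain ⟨h₁, h₂⟩ := glueAtMax_injective2 (congrArg Subtype.val h)
    exact Prod.ext (Subtype.ext h₁) (Subtype.ext h₂)
  · rintro ⟨σ, hσ⟩
    obtain ⟨τ₁, τ₂, hτ₁, hτ₂, rfl⟩ := (avoids132_and_val_eq_iff rfl).mp hσ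
    exact ⟨⟨⟨τ₁, hτ₁⟩, ⟨τ₂, hτ₂⟩⟩, rfl⟩

theorem card_avoids132 (n : ℕ) : Nat.card {σ : Perm (Fin n) // Avoids132 σ} = catalan n := by
  induction n using Nat.strong_induction_on with | _ n ih
  cases n with
  | zero =>
    rw [catalan_zero, Nat.card_eq_one_iff_unique]
    exact ⟨inferInstance, ⟨⟨1, fun ⟨i, _⟩ => i.elim0⟩⟩⟩
  | succ n =>
    let maxPos (σ : {σ : Perm (Fin (n + 1)) // Avoids132 σ}) : Fin (n + 1) := σ.1.symm (Fin.last n)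
    have card_fiber (p : Fin (n + 1)) :
        Nat.card {σ // maxPos σ = p} = catalan p * catalan (n - p) := by
      have maxPos_eq_iff (σ : Perm (Fin (n + 1))) :
          σ.symm (Fin.last n) = p ↔ (σ p : ℕ) = n + 1 - 1 := by
        rw [Equiv.symm_apply_eq, eq_comm, Fin.ext_iff, Fin.val_last, Nat.add_sub_cancel]
      rw [Nat.card_congr (Equiv.subtypeSubtypeEquivSubtypeInter Avoids132
          fun σ : Perm (Fin (n + 1)) => σ.symm (Fin.last n) = p),
        Nat.card_congr (Equiv.subtypeEquivRight fun σ => and_congr_right' (maxPos_eq_iff σ)),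
        card_avoids132_and_val_eq (m := n - p) (by omega), ih p p.isLt, ih (n - p) (by omega)]
    rw [catalan_succ, ← Nat.card_congr (Equiv.sigmaFiberEquiv maxPos), Nat.card_sigma]
    exact Finset.sum_congr rfl fun p _ => card_fiber p

theorem card_filter_lt (τ : Perm (Fin n)) (i : Fin n) :
    (Finset.univ.filter fun k => τ k < τ i).card = τ i := by
  rw [← Fin.card_Iio (τ i)]
  exact Finset.card_equiv τ (by simp)

theorem card_filter_glueAtMax_lt (τ₁ : Perm (Fin a)) (τ₂ : Perm (Fin m)) (i : Fin a) :
    (Finset.univ.filter fun k : Fin a =>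
      glueAtMax τ₁ τ₂ (Fin.castAdd m (Fin.castAdd 1 k)) <
        glueAtMax τ₁ τ₂ (Fin.castAdd m (Fin.castAdd 1 i))).card = τ₁ i := by
  simp only [Fin.lt_def, val_glueAtMax_left, Nat.add_lt_add_iff_left]
  exact card_filter_lt τ₁ i

theorem existsUnique_avoids132_of_blocks {p : Fin n} (h : p + 1 + m = n) {τ₁ : Perm (Fin p)}
    (hτ₁ : Avoids132 τ₁) {τ₂ : Perm (Fin m)} (hτ₂ : Avoids132 τ₂) :
    ∃! σ : Perm (Fin n), Avoids132 σ ∧ (σ p : ℕ) = n - 1 ∧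
      (∀ i : Fin p, (τ₁ i : ℕ) = (Finset.univ.filter fun k : Fin p =>
        σ ⟨k, k.isLt.trans p.isLt⟩ < σ ⟨i, i.isLt.trans p.isLt⟩).card) ∧
      ∀ i : Fin m, (τ₂ i : ℕ) = σ ⟨p + 1 + i, by omega⟩ := by
  obtain ⟨a, ha⟩ := p
  obtain rfl : a + 1 + m = n := h
  obtain ⟨hσ, hmax⟩ := (avoids132_and_val_eq_iff (p := ⟨a, ha⟩) rfl).mpr
    ⟨τ₁, τ₂, hτ₁, hτ₂, rfl⟩
  refine ⟨glueAtMax τ₁ τ₂, ⟨hσ, hmax, fun i => (card_filter_glueAtMax_lt τ₁ τ₂ i).symm,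
    fun i => (val_glueAtMax_right τ₁ τ₂ i).symm⟩, ?_⟩
  rintro σ ⟨hσ, hmax, hred, hright⟩
  obtain ⟨ρ₁, ρ₂, -, -, rfl⟩ := (avoids132_and_val_eq_iff rfl).mp ⟨hσ, hmax⟩
  have red_eq : τ₁ = ρ₁ :=
    Equiv.ext fun i => Fin.ext ((hred i).trans (card_filter_glueAtMax_lt ρ₁ ρ₂ i))
  have right_eq : τ₂ = ρ₂ :=
    Equiv.ext fun i => Fin.ext ((hright i).trans (val_glueAtMax_right ρ₁ ρ₂ i))
  rw [red_eq, right_eq]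

/-- Under the uniform measure on `S_n(132)` conditioned on the maximum being at position `p`
(0-indexed, `p+1 < n`), the pair `(red(σ₁⋯σ_{j-1}), σ_{j+1}⋯σ_n)` is distributed as a pair of
independent uniform picks from `S_{j-1}(132)` and `S_{n-j}(132)`: the conditional probability
of any pair `(τ₁, τ₂)` of 132-avoiding permutations equals `(1/C_{j-1})·(1/C_{n-j})`. -/
theorem conditional_independence_uniform (n : ℕ) (p : Fin n) (hp : (p : ℕ) + 1 < n)
    (τ₁ : Equiv.Perm (Fin (p : ℕ))) (hτ₁ : Avoids132 τ₁)
    (τ₂ : Equiv.Perm (Fin (n - 1 - (p : ℕ)))) (hτ₂ : Avoids132 τ₂) :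
    (Nat.card {σ : Equiv.Perm (Fin n) // Avoids132 σ ∧ (σ p : ℕ) = n - 1 ∧
        (∀ i : Fin (p : ℕ), ((τ₁ i : Fin (p : ℕ)) : ℕ) =
          (Finset.univ.filter (fun k : Fin (p : ℕ) =>
            σ ⟨k, lt_trans k.isLt p.isLt⟩ < σ ⟨i, lt_trans i.isLt p.isLt⟩)).card) ∧
        (∀ i : Fin (n - 1 - (p : ℕ)), ((τ₂ i : Fin (n - 1 - (p : ℕ))) : ℕ) =
          (σ ⟨(p : ℕ) + 1 + (i : ℕ), by have := i.isLt; omega⟩ : ℕ))} : ℚ) /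
      (Nat.card {σ : Equiv.Perm (Fin n) // Avoids132 σ ∧ (σ p : ℕ) = n - 1} : ℚ) =
      (1 / (catalan (p : ℕ) : ℚ)) * (1 / (catalan (n - 1 - (p : ℕ)) : ℚ)) := by
  have hn : (p : ℕ) + 1 + (n - 1 - p) = n := by omega
  rw [card_avoids132_and_val_eq hn, card_avoids132, card_avoids132]
  obtain ⟨unique_σ⟩ := (unique_subtype_iff_existsUnique _).mpr
    (existsUnique_avoids132_of_blocks hn hτ₁ hτ₂)
  rw [Nat.card_unique, Nat.cast_one, Nat.cast_mul, one_div_mul_one_div]
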